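/- arXiv:1709.02546 — 12 statements merged into one kernel-verified Lean document; each statement's English description precedes it below -/
import Mathlib

section
/- Let n ≥ 2 and let f : Γ₊ → ℝ be smooth, symmetric, strictly positive, strictly increasing in each argument (∂f/∂x_i > 0 on Γ₊ for every i) and positively homogeneous of degree one. Then f is inverse concave (i.e. the dual function f_* is concave on Γ₊) if and only if for every x ∈ Γ₊ and every y ∈ ℝⁿ one has Σ_{i,j} (∂²f/∂x_i∂x_j)(x) y_i y_j + 2 Σ_i ((∂f/∂x_i)(x)/x_i) y_i² ≥ 0, i.e. the matrix (f̈^{ij}(x) + 2 ḟ^i(x) x_i^{-1} δ_{ij}) is positive semidefinite at every x ∈ Γ₊. -/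
open Filter Topology Matrix

noncomputable section

/-- The open positive cone Γ₊ ⊂ ℝⁿ. -/
def posCone (n : ℕ) : Set (Fin n → ℝ) := {x | ∀ i, 0 < x i}

/-- The dual function f_*(x) = f(x₁⁻¹,…,xₙ⁻¹)⁻¹. -/
def dualF (n : ℕ) (f : (Fin n → ℝ) → ℝ) : (Fin n → ℝ) → ℝ :=
  fun x => (f fun i => (x i)⁻¹)⁻¹

/-- First partial derivative ḟ^i(x) = ∂f/∂x_i(x). -/
def D1 (n : ℕ) (f : (Fin n → ℝ) → ℝ) (x : Fin n → ℝ) (i : Fin n) : ℝ :=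
  fderiv ℝ f x (Pi.single i 1)

/-- Second partial derivative f̈^{ij}(x) = ∂²f/∂x_i∂x_j(x). -/
def D2 (n : ℕ) (f : (Fin n → ℝ) → ℝ) (x : Fin n → ℝ) (i j : Fin n) : ℝ :=
  fderiv ℝ (fun y => fderiv ℝ f y (Pi.single i 1)) x (Pi.single j 1)

theorem isOpen_posCone (n : ℕ) : IsOpen (posCone n) := by
  have : posCone n = Set.pi Set.univ (fun _ => Set.Ioi (0 : ℝ)) := by
    ext x; simp [posCone]
  rw [this]
  exact isOpen_set_pi Set.finite_univ (fun _ _ => isOpen_Ioi)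

theorem convex_posCone (n : ℕ) : Convex ℝ (posCone n) := by
  have : posCone n = Set.pi Set.univ (fun _ => Set.Ioi (0 : ℝ)) := by
    ext x; simp [posCone]
  rw [this]
  exact convex_pi (fun _ _ => convex_Ioi 0)

/-- The quadratic form in invariant notation. -/
def QF (n : ℕ) (f : (Fin n → ℝ) → ℝ) (x y : Fin n → ℝ) : ℝ :=
  fderiv ℝ (fderiv ℝ f) x y y + 2 * fderiv ℝ f x (fun i => (y i) ^ 2 / x i)

section aux
variable {n : ℕ} {f : (Fin n → ℝ) → ℝ}

theorem contDiffAt_two (hs : ContDiffOn ℝ (⊤ : ℕ∞) f (posCone n))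
    {x : Fin n → ℝ} (hx : x ∈ posCone n) : ContDiffAt ℝ 2 f x :=
  (hs.contDiffAt ((isOpen_posCone n).mem_nhds hx)).of_le (WithTop.coe_le_coe.2 (le_top : (2 : ℕ∞) ≤ ⊤))

theorem hasF1 (hs : ContDiffOn ℝ (⊤ : ℕ∞) f (posCone n))
    {x : Fin n → ℝ} (hx : x ∈ posCone n) : HasFDerivAt f (fderiv ℝ f x) x :=
  ((contDiffAt_two hs hx).differentiableAt (by norm_num)).hasFDerivAt

theorem hasF2 (hs : ContDiffOn ℝ (⊤ : ℕ∞) f (posCone n))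
    {x : Fin n → ℝ} (hx : x ∈ posCone n) :
    HasFDerivAt (fderiv ℝ f) (fderiv ℝ (fderiv ℝ f) x) x :=
  (((contDiffAt_two hs hx).fderiv_right (m := 1) (by norm_num)).differentiableAt
    (by norm_num)).hasFDerivAt

theorem symm2 (hs : ContDiffOn ℝ (⊤ : ℕ∞) f (posCone n))
    {x : Fin n → ℝ} (hx : x ∈ posCone n) (y z : Fin n → ℝ) :
    fderiv ℝ (fderiv ℝ f) x y z = fderiv ℝ (fderiv ℝ f) x z y :=
  (contDiffAt_two hs hx).isSymmSndFDerivAt (by simp) y z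

theorem sum_eq_QF (hs : ContDiffOn ℝ (⊤ : ℕ∞) f (posCone n))
    {x : Fin n → ℝ} (hx : x ∈ posCone n) (y : Fin n → ℝ) :
    (∑ i, ∑ j, D2 n f x i j * y i * y j) + 2 * ∑ i, (D1 n f x i / x i) * (y i) ^ 2
      = QF n f x y := by
  have hlin : ∀ (L : (Fin n → ℝ) →L[ℝ] ℝ) (z : Fin n → ℝ),
      L z = ∑ i, z i * L (Pi.single i 1) := by
    intro L z
    conv_lhs => rw [pi_eq_sum_univ' z]
    simp [map_sum]
  have hD2 : ∀ i j, D2 n f x i j =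
      fderiv ℝ (fderiv ℝ f) x (Pi.single j 1) (Pi.single i 1) := by
    intro i j
    unfold D2
    have := (hasF2 hs hx).clm_apply (hasFDerivAt_const (Pi.single i (1 : ℝ)) x)
    rw [this.fderiv]
    simp
  unfold QF
  congr 1
  · rw [hlin (fderiv ℝ (fderiv ℝ f) x y) y]
    refine Finset.sum_congr rfl fun i _ => ?_
    rw [symm2 hs hx, hlin (fderiv ℝ (fderiv ℝ f) x (Pi.single i 1)) y, Finset.mul_sum]
    refine Finset.sum_congr rfl fun j _ => ?_
    rw [hD2, symm2 hs hx]
    ring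
  · rw [hlin (fderiv ℝ f x)]
    congr 1
    refine Finset.sum_congr rfl fun i _ => ?_
    unfold D1
    ring

theorem euler (hs : ContDiffOn ℝ (⊤ : ℕ∞) f (posCone n))
    (hhom : ∀ k : ℝ, 0 < k → ∀ x ∈ posCone n, f (k • x) = k * f x)
    {x : Fin n → ℝ} (hx : x ∈ posCone n) : fderiv ℝ f x x = f x := by
  have h1 : HasDerivAt (fun k : ℝ => k • x) x 1 := by
    simpa using (hasDerivAt_id (1 : ℝ)).smul_const x
  have h2 : HasDerivAt (fun k : ℝ => f (k • x)) (fderiv ℝ f x x) 1 := by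
    refine HasFDerivAt.comp_hasDerivAt (f := fun k : ℝ => k • x) (l := f) 1 ?_ h1
    simpa using hasF1 hs hx
  have h3 : HasDerivAt (fun k : ℝ => k * f x) (f x) 1 := by
    simpa using (hasDerivAt_id (1 : ℝ)).mul_const (f x)
  refine h2.unique (h3.congr_of_eventuallyEq ?_)
  filter_upwards [lt_mem_nhds (zero_lt_one : (0 : ℝ) < 1)] with k hk using hhom k hk x hx

theorem hess_euler (hs : ContDiffOn ℝ (⊤ : ℕ∞) f (posCone n))
    (hhom : ∀ k : ℝ, 0 < k → ∀ x ∈ posCone n, f (k • x) = k * f x)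
    {x : Fin n → ℝ} (hx : x ∈ posCone n) (y : Fin n → ℝ) :
    fderiv ℝ (fderiv ℝ f) x y x = 0 := by
  have h1 := (hasF2 hs hx).clm_apply (hasFDerivAt_id x)
  have h2 : HasFDerivAt (fun z => fderiv ℝ f z (id z)) (fderiv ℝ f x) x := by
    refine (hasF1 hs hx).congr_of_eventuallyEq ?_
    filter_upwards [(isOpen_posCone n).mem_nhds hx] with z hz using euler hs hhom hz
  have h3 := congrArg (fun L => L y) (h1.unique h2)
  simpa using h3

theorem QF_cs (hs : ContDiffOn ℝ (⊤ : ℕ∞) f (posCone n))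
    (hhom : ∀ k : ℝ, 0 < k → ∀ x ∈ posCone n, f (k • x) = k * f x)
    (hpos : ∀ x ∈ posCone n, 0 < f x)
    {x : Fin n → ℝ} (hx : x ∈ posCone n) (hQ : ∀ y, 0 ≤ QF n f x y) (y : Fin n → ℝ) :
    2 * (fderiv ℝ f x y) ^ 2 ≤ f x * QF n f x y := by
  have hf := hpos x hx
  have key : ∀ s : ℝ, QF n f x (y - s • x) =
      QF n f x y - 4 * s * fderiv ℝ f x y + 2 * s ^ 2 * f x := by
    intro s
    have e : (fun i => ((y - s • x) i) ^ 2 / x i) =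
        (fun i => (y i) ^ 2 / x i) - (2 * s) • y + s ^ 2 • x := by
      funext i
      have := (hx i).ne'
      simp only [Pi.sub_apply, Pi.add_apply, Pi.smul_apply, smul_eq_mul]
      field_simp
      ring
    unfold QF
    rw [e]
    simp only [map_sub, map_add, map_smul, _root_.sub_apply,
      _root_.smul_apply, smul_eq_mul, euler hs hhom hx,
      hess_euler hs hhom hx, symm2 hs hx x y]
    ring
  have h := hQ (y - (fderiv ℝ f x y / f x) • x)
  rw [key] at h
  have h' := mul_nonneg hf.le h
  have e : f x * (QF n f x y - 4 * (fderiv ℝ f x y / f x) * fderiv ℝ f x y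
      + 2 * (fderiv ℝ f x y / f x) ^ 2 * f x)
      = f x * QF n f x y - 2 * (fderiv ℝ f x y) ^ 2 := by
    field_simp
    ring
  linarith

theorem line_derivs (hs : ContDiffOn ℝ (⊤ : ℕ∞) f (posCone n))
    (hpos : ∀ x ∈ posCone n, 0 < f x) (x v : Fin n → ℝ) (t : ℝ)
    (ht : x + t • v ∈ posCone n) :
    HasDerivAt (fun s => dualF n f (x + s • v))
      (-(fderiv ℝ f (fun i => (x i + t * v i)⁻¹) (fun i => -v i / (x i + t * v i) ^ 2))
        / f (fun i => (x i + t * v i)⁻¹) ^ 2) t ∧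
    HasDerivAt (fun s => 
      -(fderiv ℝ f (fun i => (x i + s * v i)⁻¹) (fun i => -v i / (x i + s * v i) ^ 2))
        / f (fun i => (x i + s * v i)⁻¹) ^ 2)
      ((2 * (fderiv ℝ f (fun i => (x i + t * v i)⁻¹)
            (fun i => -v i / (x i + t * v i) ^ 2)) ^ 2
        - f (fun i => (x i + t * v i)⁻¹) * QF n f (fun i => (x i + t * v i)⁻¹)
            (fun i => -v i / (x i + t * v i) ^ 2))
        / f (fun i => (x i + t * v i)⁻¹) ^ 3) t := by
  have hp : ∀ i, 0 < x i + t * v i := fun i => by simpa using ht i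
  have hl : ∀ i, HasDerivAt (fun s => x i + s * v i) (v i) t := fun i => by
    simpa using ((hasDerivAt_id t).mul_const (v i)).const_add (x i)
  have hu : HasDerivAt (fun s => (fun i => (x i + s * v i)⁻¹))
      (fun i => -v i / (x i + t * v i) ^ 2) t :=
    hasDerivAt_pi.2 fun i => (hl i).fun_inv (hp i).ne'
  have hu' : HasDerivAt (fun s => (fun i => -v i / (x i + s * v i) ^ 2))
      (fun i => 2 * (v i) ^ 2 / (x i + t * v i) ^ 3) t := by
    refine hasDerivAt_pi.2 fun i => ?_
    have := (hasDerivAt_const t (-v i)).fun_div ((hl i).fun_pow 2) (pow_ne_zero 2 (hp i).ne')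
    refine this.congr_deriv ?_
    have := (hp i).ne'
    field_simp
    ring
  have hmem : (fun i => (x i + t * v i)⁻¹) ∈ posCone n := fun i => inv_pos.2 (hp i)
  have hf0 := (hpos _ hmem).ne'
  have h1 : HasDerivAt (fun s => f (fun i => (x i + s * v i)⁻¹)) _ t :=
    HasFDerivAt.comp_hasDerivAt (l := f) t (hasF1 hs hmem) hu
  have h2 : HasDerivAt (fun s => fderiv ℝ f (fun i => (x i + s * v i)⁻¹)) _ t :=
    HasFDerivAt.comp_hasDerivAt (l := fderiv ℝ f) t (hasF2 hs hmem) hu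
  have h3 := h2.clm_apply hu'
  refine ⟨h1.fun_inv hf0, ?_⟩
  refine (h3.fun_neg.fun_div (h1.fun_pow 2) (pow_ne_zero 2 hf0)).congr_deriv ?_
  have e : (fun i => 2 * (v i) ^ 2 / (x i + t * v i) ^ 3) =
      (2 : ℝ) • (fun i => (-v i / (x i + t * v i) ^ 2) ^ 2 / (x i + t * v i)⁻¹) := by
    funext i
    have := (hp i).ne'
    simp only [Pi.smul_apply, smul_eq_mul]
    field_simp
  unfold QF
  rw [e, map_smul, smul_eq_mul]
  generalize (fderiv ℝ f fun i => (x i + t * v i)⁻¹)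
    (fun i => (-v i / (x i + t * v i) ^ 2) ^ 2 / (x i + t * v i)⁻¹) = A
  generalize (fderiv ℝ f fun i => (x i + t * v i)⁻¹)
    (fun i => -v i / (x i + t * v i) ^ 2) = B
  generalize (fderiv ℝ (fderiv ℝ f) fun i => (x i + t * v i)⁻¹)
    (fun i => -v i / (x i + t * v i) ^ 2) (fun i => -v i / (x i + t * v i) ^ 2) = C
  revert hf0
  generalize (f fun i => (x i + t * v i)⁻¹) = F
  intro hf0
  field_simp
  ring

end aux

/-- a smooth symmetric, positive, strictly increasing, 1-homogeneous `f` on Γ₊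
is inverse concave iff the matrix `(f̈^{ij} + 2 ḟ^i x_i⁻¹ δ_{ij})` is positive semidefinite
everywhere on Γ₊. -/
theorem inverse_concave_iff_matrix_nonneg (n : ℕ) (hn : 2 ≤ n) (f : (Fin n → ℝ) → ℝ)
    (hsmooth : ContDiffOn ℝ (⊤ : ℕ∞) f (posCone n))
    (hsym : ∀ σ : Equiv.Perm (Fin n), ∀ x ∈ posCone n, f (x ∘ σ) = f x)
    (hpos : ∀ x ∈ posCone n, 0 < f x)
    (hmono : ∀ x ∈ posCone n, ∀ i, 0 < D1 n f x i)
    (hhom : ∀ k : ℝ, 0 < k → ∀ x ∈ posCone n, f (k • x) = k * f x) :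
    ConcaveOn ℝ (posCone n) (dualF n f) ↔
      ∀ x ∈ posCone n, ∀ y : Fin n → ℝ,
        0 ≤ (∑ i, ∑ j, D2 n f x i j * y i * y j)
            + 2 * ∑ i, (D1 n f x i / x i) * (y i) ^ 2 := by
  have hline : ∀ (x v : Fin n → ℝ) (t : ℝ),
      AffineMap.lineMap x (x + v) t = x + t • v := by
    intro x v t
    simp [AffineMap.lineMap_apply, add_comm]
  have hopen : ∀ x v : Fin n → ℝ, IsOpen {t : ℝ | x + t • v ∈ posCone n} := fun x v =>
    (isOpen_posCone n).preimage (by fun_prop : Continuous fun t : ℝ => x + t • v)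
  constructor
  · intro hc u hu y
    rw [sum_eq_QF hsmooth hu]
    set x : Fin n → ℝ := fun i => (u i)⁻¹ with hx
    set v : Fin n → ℝ := fun i => -y i / (u i) ^ 2 with hv
    set T : Set ℝ := {t : ℝ | x + t • v ∈ posCone n} with hT
    have h0 : (0 : ℝ) ∈ T := by
      simpa [hT, hx, posCone] using hu
    have hcT : ConcaveOn ℝ T (fun s => dualF n f (x + s • v)) := by
      have := hc.comp_affineMap (AffineMap.lineMap x (x + v) : ℝ →ᵃ[ℝ] (Fin n → ℝ))
      have e1 : (AffineMap.lineMap x (x + v) : ℝ →ᵃ[ℝ] (Fin n → ℝ)) ⁻¹' posCone n = T := by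
        ext t
        simp only [Set.mem_preimage, hline, hT, Set.mem_ofPred_eq]
      have e2 : dualF n f ∘ (AffineMap.lineMap x (x + v) : ℝ →ᵃ[ℝ] (Fin n → ℝ)) =
          fun s => dualF n f (x + s • v) := by
        funext s
        simp only [Function.comp_apply, hline]
      rwa [e1, e2] at this
    have hd := fun t (ht : t ∈ T) => line_derivs hsmooth hpos x v t ht
    have hanti := hcT.antitoneOn_deriv (fun t ht => (hd t ht).1.differentiableAt)
    have hle := hanti.derivWithin_nonpos (x := (0 : ℝ))
    rw [derivWithin_of_isOpen (hopen x v) h0] at hle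
    have hev : deriv (fun s : ℝ => dualF n f (x + s • v)) =ᶠ[𝓝 (0 : ℝ)] fun s =>
      -(fderiv ℝ f (fun i => (x i + s * v i)⁻¹) (fun i => -v i / (x i + s * v i) ^ 2))
        / f (fun i => (x i + s * v i)⁻¹) ^ 2 := by
      filter_upwards [(hopen x v).mem_nhds h0] with t ht using (hd t ht).1.deriv
    rw [hev.deriv_eq, (hd 0 h0).2.deriv] at hle
    have eu : (fun i => (x i + 0 * v i)⁻¹) = u := by
      funext i; simp [hx]
    have ey : (fun i => -v i / (x i + 0 * v i) ^ 2) = y := by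
      funext i
      have := (hu i).ne'
      simp only [hx, hv, zero_mul, add_zero]
      field_simp
    rw [eu, ey] at hle
    have hf := hpos u hu
    have h3 : 2 * (fderiv ℝ f u y) ^ 2 - f u * QF n f u y ≤ 0 := by
      by_contra hcon
      push Not at hcon
      exact absurd hle (not_le.2 (div_pos hcon (pow_pos hf 3)))
    have h4 : 0 ≤ f u * QF n f u y := by nlinarith [sq_nonneg (fderiv ℝ f u y)]
    exact nonneg_of_mul_nonneg_right h4 hf
  · intro hQ
    have hQ' : ∀ x ∈ posCone n, ∀ y, 0 ≤ QF n f x y := fun x hx y => by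
      rw [← sum_eq_QF hsmooth hx]; exact hQ x hx y
    refine ⟨convex_posCone n, ?_⟩
    intro x hx z hz a b ha hb hab
    set v : Fin n → ℝ := z - x with hv
    set T : Set ℝ := {t : ℝ | x + t • v ∈ posCone n} with hT
    have hd := fun t (ht : t ∈ T) => line_derivs hsmooth hpos x v t ht
    have hTo : IsOpen T := hopen x v
    have hTc : Convex ℝ T := by
      have := (convex_posCone n).affine_preimage
        (AffineMap.lineMap x (x + v) : ℝ →ᵃ[ℝ] (Fin n → ℝ))
      have e1 : (AffineMap.lineMap x (x + v) : ℝ →ᵃ[ℝ] (Fin n → ℝ)) ⁻¹' posCone n = T := by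
        ext t
        simp only [Set.mem_preimage, hline, hT, Set.mem_ofPred_eq]
      rwa [e1] at this
    have hcT : ConcaveOn ℝ T (fun s => dualF n f (x + s • v)) := by
      refine concaveOn_of_hasDerivWithinAt2_nonpos hTc
        (fun t ht => (hd t ht).1.continuousAt.continuousWithinAt)
        (fun t ht => (hd t (interior_subset ht)).1.hasDerivWithinAt)
        (fun t ht => (hd t (interior_subset ht)).2.hasDerivWithinAt) ?_
      intro t ht
      have htT : t ∈ T := interior_subset ht
      have ht' : x + t • v ∈ posCone n := htT
      have hp : ∀ i, 0 < x i + t * v i := fun i => by simpa using ht' i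
      have hmem : (fun i => (x i + t * v i)⁻¹) ∈ posCone n := fun i => inv_pos.2 (hp i)
      refine div_nonpos_of_nonpos_of_nonneg ?_ (pow_pos (hpos _ hmem) 3).le
      exact sub_nonpos.2 (QF_cs hsmooth hhom hpos hmem (hQ' _ hmem) _)
    have h0 : (0 : ℝ) ∈ T := by simpa [hT] using hx
    have h1 : (1 : ℝ) ∈ T := by simpa [hT, hv] using hz
    have := hcT.2 h0 h1 ha hb hab
    have e : x + b • v = a • x + b • z := by
      have : a = 1 - b := by linarith
      subst this
      rw [hv]
      module
    rw [← e]
    simpa [hv] using this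
end
end

section
/- Let n ≥ 2 and let f_* : Γ₊ → ℝ be a smooth symmetric function. Define F_* on the set of positive definite real symmetric n×n matrices by F_*(A) = f_*(λ₁(A), …, λₙ(A)), where λ₁(A), …, λₙ(A) are the eigenvalues of A (this is well defined since f_* is symmetric). Then F_* is concave on the convex cone of positive definite symmetric matrices if and only if f_* is concave on Γ₊. -/
open Filter Topology Matrix

noncomputable section

/-- The matrix function F_*(A) = f_*(eigenvalues of A), defined on Hermitian (= real symmetric)
matrices and extended by 0 elsewhere. -/
def matrixFn (n : ℕ) (fstar : (Fin n → ℝ) → ℝ) (A : Matrix (Fin n) (Fin n) ℝ) : ℝ :=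
  if h : A.IsHermitian then fstar h.eigenvalues else 0

theorem exists_perm_aux (n : ℕ) (g x : Fin n → ℝ)
    (h : Multiset.map g Finset.univ.val = Multiset.map x Finset.univ.val) :
    ∃ σ : Equiv.Perm (Fin n), g = x ∘ σ := by
  have hp : (List.ofFn g).Perm (List.ofFn x) := by
    rw [Fin.univ_val_map, Fin.univ_val_map] at h
    exact Multiset.coe_eq_coe.1 h
  have hp2 : (List.ofFn (g ∘ Tuple.sort g)).Perm (List.ofFn (x ∘ Tuple.sort x)) :=
    ((Equiv.Perm.ofFn_comp_perm _ g).trans hp).trans (Equiv.Perm.ofFn_comp_perm _ x).symm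
  have he : g ∘ Tuple.sort g = x ∘ Tuple.sort x := by
    apply List.ofFn_injective
    exact hp2.eq_of_sortedLE (Tuple.monotone_sort g).sortedLE_ofFn
      (Tuple.monotone_sort x).sortedLE_ofFn
  refine ⟨(Tuple.sort g).symm.trans (Tuple.sort x), ?_⟩
  funext i
  have := congrFun he ((Tuple.sort g).symm i)
  simpa using this

theorem matrixFn_diagonal_aux (n : ℕ) (f : (Fin n → ℝ) → ℝ)
    (hsym : ∀ σ : Equiv.Perm (Fin n), ∀ x ∈ posCone n, f (x ∘ σ) = f x)
    (x : Fin n → ℝ) (hx : x ∈ posCone n) : matrixFn n f (diagonal x) = f x := by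
  have h : (diagonal x).IsHermitian := isHermitian_diagonal x
  have h1 := h.roots_charpoly_eq_eigenvalues
  rw [charpoly_diagonal, Polynomial.roots_prod _ _
    (by simp [Finset.prod_ne_zero_iff, Polynomial.X_sub_C_ne_zero])] at h1
  have h2 : Multiset.map h.eigenvalues Finset.univ.val = Multiset.map x Finset.univ.val := by
    simpa [Function.comp_def] using h1.symm
  obtain ⟨σ, hσ⟩ := exists_perm_aux n _ _ h2
  rw [matrixFn, dif_pos h, hσ, hsym σ x hx]

theorem doublyStochastic_le_aux (n : ℕ) (f : (Fin n → ℝ) → ℝ)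
    (hsym : ∀ σ : Equiv.Perm (Fin n), ∀ x ∈ posCone n, f (x ∘ σ) = f x)
    (hf : ConcaveOn ℝ (posCone n) f)
    (M : Matrix (Fin n) (Fin n) ℝ) (hM : M ∈ doublyStochastic ℝ (Fin n))
    (x : Fin n → ℝ) (hx : x ∈ posCone n) :
    M *ᵥ x ∈ posCone n ∧ f x ≤ f (M *ᵥ x) := by
  obtain ⟨w, hw0, hw1, hw⟩ := exists_eq_sum_perm_of_mem_doublyStochastic hM
  have hmem : ∀ σ : Equiv.Perm (Fin n), x ∘ σ ∈ posCone n := fun σ i => hx (σ i)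
  have key : M *ᵥ x = ∑ σ, w σ • (x ∘ σ) := by
    rw [← hw, Matrix.sum_mulVec]
    refine Finset.sum_congr rfl fun σ _ => ?_
    rw [Matrix.smul_mulVec, Matrix.permMatrix_mulVec]
  rw [key]
  refine ⟨hf.1.sum_mem (fun i _ => hw0 i) hw1 (fun i _ => hmem i), ?_⟩
  have := hf.le_map_sum (t := Finset.univ) (fun i _ => hw0 i) hw1 (fun i _ => hmem i)
  refine le_trans (le_of_eq ?_) this
  rw [Finset.sum_congr rfl fun σ _ => by rw [hsym σ x hx], ← Finset.sum_smul, hw1, one_smul]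

theorem schur_aux (n : ℕ) (f : (Fin n → ℝ) → ℝ)
    (hsym : ∀ σ : Equiv.Perm (Fin n), ∀ x ∈ posCone n, f (x ∘ σ) = f x)
    (hf : ConcaveOn ℝ (posCone n) f)
    (A : Matrix (Fin n) (Fin n) ℝ) (hA : A.PosDef)
    (V : Matrix.unitaryGroup (Fin n) ℝ) :
    (fun i => (star (V : Matrix (Fin n) (Fin n) ℝ) * A * V) i i) ∈ posCone n ∧
    matrixFn n f A ≤ f (fun i => (star (V : Matrix (Fin n) (Fin n) ℝ) * A * V) i i) := by
  set x := hA.1.eigenvalues with hxdef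
  have hx : x ∈ posCone n := hA.eigenvalues_pos
  let W : Matrix.unitaryGroup (Fin n) ℝ := star V * hA.1.eigenvectorUnitary
  have e : star (V : Matrix (Fin n) (Fin n) ℝ) * A * V
      = (W : Matrix (Fin n) (Fin n) ℝ) * diagonal x * star (W : Matrix (Fin n) (Fin n) ℝ) := by
    conv_lhs => rw [hA.1.spectral_theorem, Unitary.conjStarAlgAut_apply]
    simp only [W, Submonoid.coe_mul, Unitary.coe_star, star_mul, star_star, mul_assoc]
    rfl
  have hM : (Matrix.of fun i j => (W : Matrix (Fin n) (Fin n) ℝ) i j ^ 2) ∈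
      doublyStochastic ℝ (Fin n) := by
    rw [mem_doublyStochastic_iff_sum]
    refine ⟨fun i j => sq_nonneg _, fun i => ?_, fun j => ?_⟩
    · have := congrFun (congrFun (Unitary.coe_mul_star_self W) i) i
      simpa [Matrix.mul_apply, star_apply, sq] using this
    · have := congrFun (congrFun (Unitary.coe_star_mul_self W) j) j
      simpa [Matrix.mul_apply, star_apply, sq] using this
  have e2 : (fun i => (star (V : Matrix (Fin n) (Fin n) ℝ) * A * V) i i)
      = (Matrix.of fun i j => (W : Matrix (Fin n) (Fin n) ℝ) i j ^ 2) *ᵥ x := by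
    rw [e]
    funext i
    rw [Matrix.mul_apply]
    simp only [mul_diagonal, star_apply, mulVec, dotProduct, of_apply, star_trivial]
    exact Finset.sum_congr rfl fun j _ => by ring
  rw [e2, matrixFn, dif_pos hA.1]
  exact doublyStochastic_le_aux n f hsym hf _ hM x hx

/-- for a smooth symmetric `f_*` on Γ₊, the associated matrix function
`F_*(A) = f_*(λ(A))` is concave on the cone of positive definite symmetric matrices
iff `f_*` is concave on Γ₊. -/
theorem matrix_concave_iff_concave (n : ℕ) (hn : 2 ≤ n) (fstar : (Fin n → ℝ) → ℝ)
    (hsmooth : ContDiffOn ℝ (⊤ : ℕ∞) fstar (posCone n))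
    (hsym : ∀ σ : Equiv.Perm (Fin n), ∀ x ∈ posCone n, fstar (x ∘ σ) = fstar x) :
    ConcaveOn ℝ {A : Matrix (Fin n) (Fin n) ℝ | A.IsSymm ∧ A.PosDef}
        (matrixFn n fstar) ↔
      ConcaveOn ℝ (posCone n) fstar := by
  constructor
  · intro h
    have hconv : Convex ℝ (posCone n) := by
      intro x hx y hy a b ha hb hab i
      rcases ha.eq_or_lt with rfl | ha
      · have : b = 1 := by linarith
        subst this
        simpa using hy i
      · have h1 := mul_pos ha (hx i)
        have h2 := mul_nonneg hb (hy i).le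
        simp only [Pi.add_apply, Pi.smul_apply, smul_eq_mul]
        linarith
    refine ⟨hconv, fun x hx y hy a b ha hb hab => ?_⟩
    have hd : ∀ z ∈ posCone n, diagonal z ∈
        {A : Matrix (Fin n) (Fin n) ℝ | A.IsSymm ∧ A.PosDef} := fun z hz =>
      ⟨isSymm_diagonal z, PosDef.diagonal hz⟩
    have := h.2 (hd x hx) (hd y hy) ha hb hab
    rw [← diagonal_smul, ← diagonal_smul, diagonal_add,
      matrixFn_diagonal_aux n fstar hsym x hx, matrixFn_diagonal_aux n fstar hsym y hy] at this
    rw [← matrixFn_diagonal_aux n fstar hsym _ (hconv hx hy ha hb hab)]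
    exact this
  · intro hf
    have hconv : Convex ℝ {A : Matrix (Fin n) (Fin n) ℝ | A.IsSymm ∧ A.PosDef} := by
      rintro A ⟨hA, hA'⟩ B ⟨hB, hB'⟩ a b ha hb hab
      refine ⟨(hA.smul a).add (hB.smul b), ?_⟩
      rcases ha.eq_or_lt with rfl | ha
      · have : b = 1 := by linarith
        subst this
        simpa using hB'
      · exact (hA'.smul ha).add_posSemidef (hB'.posSemidef.smul hb)
    refine ⟨hconv, fun A hA B hB a b ha hb hab => ?_⟩
    have hC := (hconv hA hB ha hb hab).2
    set V := hC.1.eigenvectorUnitary with hV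
    obtain ⟨hA1, hA2⟩ := schur_aux n fstar hsym hf A hA.2 V
    obtain ⟨hB1, hB2⟩ := schur_aux n fstar hsym hf B hB.2 V
    have e : hC.1.eigenvalues =
        a • (fun i => (star (V : Matrix (Fin n) (Fin n) ℝ) * A * V) i i) +
        b • (fun i => (star (V : Matrix (Fin n) (Fin n) ℝ) * B * V) i i) := by
      have h1 := hC.1.conjStarAlgAut_star_eigenvectorUnitary
      rw [Unitary.conjStarAlgAut_star_apply] at h1
      funext i
      have h2 := congrFun (congrFun h1 i) i
      rw [mul_add, add_mul] at h2
      simpa using h2.symm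
    have h3 := hf.2 hA1 hB1 ha hb hab
    rw [← e] at h3
    rw [matrixFn.eq_1 n fstar (a • A + b • B), dif_pos hC.1]
    refine le_trans ?_ h3
    simp only [smul_eq_mul]
    gcongr
end
end

section
/- Let n ≥ 2 and let f : Γ₊ → ℝ be smooth, symmetric, strictly positive, strictly increasing in each argument, positively homogeneous of degree one, and inverse concave. Then for every κ ∈ Γ₊ and every y ∈ ℝⁿ, Σ_{k,l} f̈^{kl}(κ) y_k y_l + 2 Σ_k (ḟ^k(κ)/κ_k) y_k² ≥ 2 f(κ)^{-1} (Σ_k ḟ^k(κ) y_k)². -/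
open Filter Topology Matrix

noncomputable section

theorem second_deriv_nonpos_of_concave (h H : ℝ → ℝ) (S : Set ℝ) (hS : IsOpen S) (h0 : (0:ℝ) ∈ S)
    (hc : ConcaveOn ℝ S h) (hd : ∀ t ∈ S, HasDerivAt h (H t) t) (a : ℝ)
    (ha : HasDerivAt H a 0) : a ≤ 0 := by
  have hanti : AntitoneOn H S := by
    intro s hs t ht hst
    rcases hst.eq_or_lt with rfl | hlt
    · exact le_rfl
    · exact (hc.le_slope_of_hasDerivAt hs ht hlt (hd t ht)).trans
        (hc.slope_le_of_hasDerivAt hs ht hlt (hd s hs))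
  have h1 : derivWithin H S 0 ≤ 0 := hanti.derivWithin_nonpos
  rwa [ha.hasDerivWithinAt.derivWithin (hS.uniqueDiffWithinAt h0)] at h1

/-- if `f` is inverse concave then
`Σ_{k,l} f̈^{kl} y_k y_l + 2 Σ_k (ḟ^k/κ_k) y_k² ≥ 2 f(κ)⁻¹ (Σ_k ḟ^k y_k)²`. -/
theorem inverse_concave_quadratic_ineq (n : ℕ) (hn : 2 ≤ n) (f : (Fin n → ℝ) → ℝ)
    (hsmooth : ContDiffOn ℝ (⊤ : ℕ∞) f (posCone n))
    (hsym : ∀ σ : Equiv.Perm (Fin n), ∀ x ∈ posCone n, f (x ∘ σ) = f x)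
    (hpos : ∀ x ∈ posCone n, 0 < f x)
    (hmono : ∀ x ∈ posCone n, ∀ i, 0 < D1 n f x i)
    (hhom : ∀ k : ℝ, 0 < k → ∀ x ∈ posCone n, f (k • x) = k * f x)
    (hinvconc : ConcaveOn ℝ (posCone n) (dualF n f)) :
    ∀ κ ∈ posCone n, ∀ y : Fin n → ℝ,
      2 * (f κ)⁻¹ * (∑ k, D1 n f κ k * y k) ^ 2 ≤
        (∑ k, ∑ l, D2 n f κ k l * y k * y l)
          + 2 * ∑ k, (D1 n f κ k / κ k) * (y k) ^ 2 := by
  intro κ hκ y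
  have hκ0 : ∀ i, κ i ≠ 0 := fun i => (hκ i).ne'
  have hopen := isOpen_posCone n
  have hcd : ContDiffAt ℝ 2 f κ :=
    (hsmooth.contDiffAt (hopen.mem_nhds hκ)).of_le (by
      have : ((2 : ℕ∞) : WithTop ℕ∞) ≤ ((⊤ : ℕ∞) : WithTop ℕ∞) := WithTop.coe_le_coe.2 le_top
      exact this)
  have hfd : ∀ x ∈ posCone n, HasFDerivAt f (fderiv ℝ f x) x := fun x hx =>
    ((hsmooth.contDiffAt (hopen.mem_nhds hx)).differentiableAt (by simp)).hasFDerivAt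
  have hfd2 : HasFDerivAt (fderiv ℝ f) (fderiv ℝ (fderiv ℝ f) κ) κ :=
    ((hcd.fderiv_right (m := 1) (by norm_num)).differentiableAt (by simp)).hasFDerivAt
  set L : ℝ → Fin n → ℝ := fun t i => (κ i)⁻¹ + t * (-(y i / κ i ^ 2)) with hL
  set S : Set ℝ := L ⁻¹' posCone n with hS
  have hLcont : Continuous L := by fun_prop
  have hSo : IsOpen S := hopen.preimage hLcont
  have h0 : (0:ℝ) ∈ S := by
    intro i; simp only [hL]; simpa using hκ i
  set γ : ℝ → Fin n → ℝ := fun t i => (L t i)⁻¹ with hγ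
  have hγ0 : γ 0 = κ := by ext i; simp [hγ, hL]
  have hγS : ∀ t ∈ S, γ t ∈ posCone n := fun t ht i => inv_pos.2 (ht i)
  set γ' : ℝ → Fin n → ℝ := fun t i => (y i / κ i ^ 2) / (L t i) ^ 2 with hγ'
  have hγ'0 : γ' 0 = y := by
    ext i; have := hκ0 i; simp [hγ', hL]; field_simp
  have hLd : ∀ i t, HasDerivAt (fun t => L t i) (-(y i / κ i ^ 2)) t := by
    intro i t
    have := ((hasDerivAt_id t).mul_const (-(y i / κ i ^ 2))).const_add ((κ i)⁻¹)
    rw [one_mul] at this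
    exact this
  have hγd : ∀ t ∈ S, HasDerivAt γ (γ' t) t := by
    intro t ht
    rw [hasDerivAt_pi]
    intro i
    have := (hLd i t).inv (ht i).ne'
    rw [neg_neg] at this
    exact this
  have hγ'd : HasDerivAt γ' (fun i => 2 * y i ^ 2 / κ i) 0 := by
    rw [hasDerivAt_pi]
    intro i
    have h1 := ((hLd i 0).pow 2).inv (pow_ne_zero 2 (h0 i).ne')
    have h2 := h1.const_mul (y i / κ i ^ 2)
    have h3 := hκ0 i
    refine (h2.congr_deriv ?_)
    simp [hL]
    field_simp
  have hg : ∀ t ∈ S, HasDerivAt (fun t => f (γ t)) (fderiv ℝ f (γ t) (γ' t)) t := fun t ht =>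
    (hfd _ (hγS t ht)).comp_hasDerivAt t (hγd t ht)
  have hG : HasDerivAt (fun t => fderiv ℝ f (γ t) (γ' t))
      (fderiv ℝ (fderiv ℝ f) κ y y + fderiv ℝ f κ (fun i => 2 * y i ^ 2 / κ i)) 0 := by
    have h1 : HasDerivAt (fun t => fderiv ℝ f (γ t)) (fderiv ℝ (fderiv ℝ f) κ y) 0 := by
      have h2 := hγd 0 h0
      rw [hγ'0] at h2
      rw [← hγ0] at hfd2
      have h3 := hfd2.comp_hasDerivAt 0 h2
      rw [hγ0] at h3
      exact h3
    have h4 := h1.clm_apply hγ'd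
    rwa [hγ0, hγ'0] at h4
  have hgpos : ∀ t ∈ S, f (γ t) ≠ 0 := fun t ht => (hpos _ (hγS t ht)).ne'
  have hconc : ConcaveOn ℝ S (fun t => (f (γ t))⁻¹) := by
    have hcomb : ∀ s t a b : ℝ, a + b = 1 → L (a • s + b • t) = a • L s + b • L t := by
      intro s t a b hab
      ext i
      simp only [hL, smul_eq_mul, Pi.add_apply, Pi.smul_apply]
      linear_combination (-(κ i)⁻¹) * hab
    refine ⟨?_, ?_⟩
    · intro s hs t ht a b ha hb hab
      change L (a • s + b • t) ∈ posCone n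
      rw [hcomb s t a b hab]
      exact hinvconc.1 hs ht ha hb hab
    · intro s hs t ht a b ha hb hab
      have := hinvconc.2 hs ht ha hb hab
      rw [← hcomb s t a b hab] at this
      exact this
  have key := second_deriv_nonpos_of_concave _ _ S hSo h0 hconc
    (fun t ht => (hg t ht).inv (hgpos t ht)) _
    (hG.neg.div ((hg 0 h0).pow 2) (pow_ne_zero 2 (hgpos 0 h0)))
  simp only [Pi.neg_apply, hγ0, hγ'0] at key
  have hlin : ∀ (T : (Fin n → ℝ) →L[ℝ] ℝ) (z : Fin n → ℝ),
      T z = ∑ k, T (Pi.single k 1) * z k := by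
    intro T z
    have hz : z = ∑ k, z k • (Pi.single k (1:ℝ) : Fin n → ℝ) := by
      ext j
      simp [Finset.sum_apply, Pi.single_apply]
    conv_lhs => rw [hz]
    rw [map_sum]
    refine Finset.sum_congr rfl fun k _ => ?_
    rw [map_smul, smul_eq_mul, mul_comm]
  have e1 : fderiv ℝ f κ y = ∑ k, D1 n f κ k * y k := hlin _ _
  have e2 : fderiv ℝ f κ (fun i => 2 * y i ^ 2 / κ i)
      = 2 * ∑ k, (D1 n f κ k / κ k) * (y k) ^ 2 := by
    rw [hlin, Finset.mul_sum]
    refine Finset.sum_congr rfl fun k _ => ?_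
    simp only [D1]; ring
  have hD2 : ∀ k l, D2 n f κ k l
      = fderiv ℝ (fderiv ℝ f) κ (Pi.single l 1) (Pi.single k 1) := by
    intro k l
    have := hfd2.clm_apply (hasFDerivAt_const (Pi.single k (1:ℝ) : Fin n → ℝ) κ)
    simp only [D2]
    rw [this.fderiv]
    simp
  have e3 : fderiv ℝ (fderiv ℝ f) κ y y = ∑ k, ∑ l, D2 n f κ k l * y k * y l := by
    rw [hlin]
    refine Finset.sum_congr rfl fun k _ => ?_
    have := hlin ((ContinuousLinearMap.apply ℝ ℝ (Pi.single k (1:ℝ) : Fin n → ℝ)).comp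
      (fderiv ℝ (fderiv ℝ f) κ)) y
    simp only [ContinuousLinearMap.comp_apply, ContinuousLinearMap.apply_apply] at this
    rw [this, Finset.sum_mul]
    refine Finset.sum_congr rfl fun l _ => ?_
    rw [hD2]; ring
  rw [e1, e2, e3] at key
  have hf := hpos κ hκ
  generalize (∑ k, D1 n f κ k * y k) = A at *
  generalize (∑ k, ∑ l, D2 n f κ k l * y k * y l)
          + 2 * ∑ k, (D1 n f κ k / κ k) * (y k) ^ 2 = B at *
  have h5 : 2 * (f κ)⁻¹ * A ^ 2 - B ≤ 0 := by
    have h6 := mul_nonpos_of_nonneg_of_nonpos (sq_nonneg (f κ)) key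
    refine le_of_eq_of_le ?_ h6
    have hf0 := hf.ne'
    push_cast
    simp only [Nat.add_one_sub_one, pow_one]
    field_simp
    ring
  linarith
end
end

section
/- Let n ≥ 2 and let f : Γ₊ → ℝ be smooth, symmetric, strictly positive, strictly increasing in each argument, positively homogeneous of degree one, and inverse concave. Then for every κ ∈ Γ₊ and all indices k ≠ l with κ_k ≠ κ_l, (ḟ^k(κ) − ḟ^l(κ))/(κ_k − κ_l) + ḟ^k(κ)/κ_l + ḟ^l(κ)/κ_k ≥ 0. -/
open Filter Topology Matrix

noncomputable section

/-- if `f` is inverse concave then for `k ≠ l` with `κ_k ≠ κ_l`,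
`(ḟ^k − ḟ^l)/(κ_k − κ_l) + ḟ^k/κ_l + ḟ^l/κ_k ≥ 0`. -/
theorem inverse_concave_offdiag_ineq (n : ℕ) (hn : 2 ≤ n) (f : (Fin n → ℝ) → ℝ)
    (hsmooth : ContDiffOn ℝ (⊤ : ℕ∞) f (posCone n))
    (hsym : ∀ σ : Equiv.Perm (Fin n), ∀ x ∈ posCone n, f (x ∘ σ) = f x)
    (hpos : ∀ x ∈ posCone n, 0 < f x)
    (hmono : ∀ x ∈ posCone n, ∀ i, 0 < D1 n f x i)
    (hhom : ∀ k : ℝ, 0 < k → ∀ x ∈ posCone n, f (k • x) = k * f x)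
    (hinvconc : ConcaveOn ℝ (posCone n) (dualF n f)) :
    ∀ κ ∈ posCone n, ∀ k l : Fin n, k ≠ l → κ k ≠ κ l →
      0 ≤ (D1 n f κ k - D1 n f κ l) / (κ k - κ l)
            + D1 n f κ k / κ l + D1 n f κ l / κ k := by
  intro κ hκ k l hkl hne
  have hk := hκ k
  have hl := hκ l
  have hopen : IsOpen (posCone n) := by
    have : posCone n = ⋂ i, {x : Fin n → ℝ | 0 < x i} := by
      ext x; simp [posCone]
    rw [this]
    exact isOpen_iInter_of_finite fun i => isOpen_lt continuous_const (continuous_apply i)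
  have hdiff : DifferentiableAt ℝ f κ :=
    (hsmooth.contDiffAt (hopen.mem_nhds hκ)).differentiableAt (by simp)
  set d : ℝ := (κ l)⁻¹ - (κ k)⁻¹ with hd
  set v : Fin n → ℝ := fun i => (κ (Equiv.swap k l i))⁻¹ - (κ i)⁻¹ with hv
  have hv2 : ∀ i, -(v i) * (κ i)^2
      = (-(d * κ k ^ 2)) * (Pi.single k (1:ℝ) : Fin n → ℝ) i
        + (d * κ l ^ 2) * (Pi.single l (1:ℝ) : Fin n → ℝ) i := by
    intro i
    by_cases h1 : i = k
    · subst h1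
      simp [hv, hd, hkl]; ring
    · by_cases h2 : i = l
      · subst h2
        simp [hv, hd, h1]
      · simp [hv, h1, h2, Equiv.swap_apply_of_ne_of_ne h1 h2]
  set c : ℝ → Fin n → ℝ := fun t i => ((κ i)⁻¹ + t * v i)⁻¹ with hc
  have hc0 : c 0 = κ := by
    ext i; simp [hc]
  have hcd : HasDerivAt c (fun i => -(v i) * (κ i)^2) 0 := by
    rw [hasDerivAt_pi]
    intro i
    have h1 : HasDerivAt (fun t : ℝ => (κ i)⁻¹ + t * v i) (v i) 0 := by
      simpa using ((hasDerivAt_id (0:ℝ)).mul_const (v i)).const_add ((κ i)⁻¹)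
    have hi := (hκ i).ne'
    have h2 := h1.fun_inv (by simp [hi])
    have h3 : -(v i) / ((κ i)⁻¹ + 0 * v i) ^ 2 = -(v i) * (κ i)^2 := by
      simp
    rw [h3] at h2
    exact h2
  have hfc : HasDerivAt (fun t => f (c t)) (fderiv ℝ f κ (fun i => -(v i) * (κ i)^2)) 0 := by
    have h : HasFDerivAt f (fderiv ℝ f κ) (c 0) := by rw [hc0]; exact hdiff.hasFDerivAt
    exact h.comp_hasDerivAt 0 hcd
  have hval : fderiv ℝ f κ (fun i => -(v i) * (κ i)^2)
      = -(d * κ k ^ 2) * D1 n f κ k + (d * κ l ^ 2) * D1 n f κ l := by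
    have : (fun i => -(v i) * (κ i)^2) = (-(d * κ k ^ 2)) • (Pi.single k (1:ℝ) : Fin n → ℝ)
        + (d * κ l ^ 2) • (Pi.single l (1:ℝ) : Fin n → ℝ) := by
      ext i; simpa using hv2 i
    rw [this, map_add, map_smul, map_smul]; simp [D1]
  have hle : ∀ t : ℝ, 0 < t → t < 1 → f (c t) ≤ f κ := by
    intro t ht0 ht1
    have hx : (fun i => (κ i)⁻¹) ∈ posCone n := fun i => inv_pos.mpr (hκ i)
    have hy : (fun i => (κ (Equiv.swap k l i))⁻¹) ∈ posCone n := fun i => inv_pos.mpr (hκ _)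
    have hcc := hinvconc.2 hx hy (sub_nonneg.mpr ht1.le) ht0.le (by ring)
    have hmem := hinvconc.1 hx hy (sub_nonneg.mpr ht1.le) ht0.le (by ring)
    have heq : ((1 - t) • (fun i => (κ i)⁻¹) + t • (fun i => (κ (Equiv.swap k l i))⁻¹))
        = fun i => (κ i)⁻¹ + t * v i := by
      ext i; simp [hv]; ring
    rw [heq] at hcc hmem
    have hs : f (fun i => κ (Equiv.swap k l i)) = f κ := hsym (Equiv.swap k l) κ hκ
    simp only [dualF, inv_inv, smul_eq_mul, hs] at hcc
    have hcp : c t ∈ posCone n := fun i => inv_pos.mpr (hmem i)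
    have h3 : (f κ)⁻¹ ≤ (f (c t))⁻¹ := by
      calc (f κ)⁻¹ = (1 - t) * (f κ)⁻¹ + t * (f κ)⁻¹ := by ring
        _ ≤ _ := hcc
    exact (inv_le_inv₀ (hpos _ hκ) (hpos _ hcp)).mp h3
  have hmain : -(d * κ k ^ 2) * D1 n f κ k + (d * κ l ^ 2) * D1 n f κ l ≤ 0 := by
    rw [← hval]
    refine le_of_tendsto hfc.tendsto_slope_zero_right ?_
    filter_upwards [Ioo_mem_nhdsGT (zero_lt_one' ℝ)] with t ht
    have := hle t ht.1 ht.2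
    simp only [zero_add, hc0, smul_eq_mul]
    exact mul_nonpos_of_nonneg_of_nonpos (inv_nonneg.mpr ht.1.le) (by linarith)
  have hsub : κ k - κ l ≠ 0 := sub_ne_zero.mpr hne
  have hfin : (D1 n f κ k - D1 n f κ l) / (κ k - κ l)
            + D1 n f κ k / κ l + D1 n f κ l / κ k
      = (d * κ k ^ 2 * D1 n f κ k - d * κ l ^ 2 * D1 n f κ l) / (κ k - κ l) ^ 2 := by
    rw [hd]
    field_simp
    ring
  rw [hfin]
  exact div_nonneg (by linarith) (sq_nonneg _)
end
end

section
/- Let n ≥ 2 and let f : Γ₊ → ℝ be smooth, symmetric, strictly positive, strictly increasing in each argument, positively homogeneous of degree one, normalized so that f(1, …, 1) = n, and inverse concave. Then for every κ ∈ Γ₊, Σ_{k=1}^n ḟ^k(κ) κ_k² ≥ f(κ)²/n. -/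
open Filter Topology Matrix

noncomputable section

/-- if `f` is inverse concave and normalized by `f(1,…,1) = n`, then
`Σ_k ḟ^k(κ) κ_k² ≥ f(κ)²/n` for every `κ ∈ Γ₊`. -/
theorem inverse_concave_second_moment (n : ℕ) (hn : 2 ≤ n) (f : (Fin n → ℝ) → ℝ)
    (hsmooth : ContDiffOn ℝ (⊤ : ℕ∞) f (posCone n))
    (hsym : ∀ σ : Equiv.Perm (Fin n), ∀ x ∈ posCone n, f (x ∘ σ) = f x)
    (hpos : ∀ x ∈ posCone n, 0 < f x)
    (hmono : ∀ x ∈ posCone n, ∀ i, 0 < D1 n f x i)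
    (hhom : ∀ k : ℝ, 0 < k → ∀ x ∈ posCone n, f (k • x) = k * f x)
    (hnorm : f (fun _ => 1) = n)
    (hinvconc : ConcaveOn ℝ (posCone n) (dualF n f)) :
    ∀ κ ∈ posCone n, f κ ^ 2 / n ≤ ∑ k, D1 n f κ k * κ k ^ 2 := by
  intro κ hκ
  have hn0 : (0 : ℝ) < n := by
    have : 0 < n := by omega
    exact_mod_cast this
  have hopen : IsOpen (posCone n) := by
    have : posCone n = ⋂ i, {x : Fin n → ℝ | 0 < x i} := by
      ext x; simp [posCone]
    rw [this]
    exact isOpen_iInter_of_finite fun i => isOpen_lt continuous_const (continuous_apply i)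
  have hf : DifferentiableAt ℝ f κ :=
    ((hsmooth.contDiffAt (hopen.mem_nhds hκ)).differentiableAt (by simp))
  have hfκ := hpos κ hκ
  -- the curve
  let c : ℝ → Fin n → ℝ := fun t i => ((κ i)⁻¹ + t)⁻¹
  have hc0 : c 0 = κ := by ext i; simp [c]
  have hc : HasDerivAt c (fun i => -(κ i) ^ 2) 0 := by
    rw [hasDerivAt_pi]
    intro i
    have hne : (κ i)⁻¹ + (0 : ℝ) ≠ 0 := by
      have := inv_pos.2 (hκ i)
      simpa using this.ne'
    have h := ((hasDerivAt_id (0 : ℝ)).const_add ((κ i)⁻¹)).inv (by simpa using hne)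
    have e : -(1 : ℝ) / ((κ i)⁻¹ + id (0 : ℝ)) ^ 2 = -(κ i) ^ 2 := by
      simp [neg_div]
    rw [← e]
    exact h
  have hg : HasDerivAt (fun t => f (c t)) (fderiv ℝ f κ (fun i => -(κ i) ^ 2)) 0 := by
    have hf' : HasFDerivAt f (fderiv ℝ f κ) (c 0) := by rw [hc0]; exact hf.hasFDerivAt
    exact hf'.comp_hasDerivAt 0 hc
  have hsum : fderiv ℝ f κ (fun i => -(κ i) ^ 2) = -∑ k, D1 n f κ k * κ k ^ 2 := by
    have hv : (fun i => -(κ i) ^ 2) = ∑ k, (-(κ k) ^ 2) • (Pi.single k (1 : ℝ) : Fin n → ℝ) := by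
      ext i
      simp [Finset.sum_apply, Pi.single_apply]
    rw [hv, map_sum, ← Finset.sum_neg_distrib]
    refine Finset.sum_congr rfl fun k _ => ?_
    rw [map_smul, D1, smul_eq_mul]
    ring
  rw [hsum] at hg
  have hh := hg.inv (by rw [hc0]; exact hfκ.ne')
  rw [hc0, neg_neg] at hh
  have hlim := hh.tendsto_slope_zero_right
  have hle : (1 : ℝ) / n ≤ (∑ k, D1 n f κ k * κ k ^ 2) / f κ ^ 2 := by
    refine ge_of_tendsto hlim ?_
    filter_upwards [self_mem_nhdsWithin] with t ht
    have ht : 0 < t := ht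
    have hx : (fun i => 2 * (κ i)⁻¹) ∈ posCone n := fun i =>
      mul_pos two_pos (inv_pos.2 (hκ i))
    have hy : (fun _ => 2 * t) ∈ posCone n := fun i => mul_pos two_pos ht
    have hcc := hinvconc.2 hx hy (show (0 : ℝ) ≤ 1 / 2 by norm_num)
      (show (0 : ℝ) ≤ 1 / 2 by norm_num) (by norm_num)
    have e1 : dualF n f (fun i => 2 * (κ i)⁻¹) = 2 * (f κ)⁻¹ := by
      have : (fun i => (2 * (κ i)⁻¹)⁻¹) = (2⁻¹ : ℝ) • κ := by
        ext i; simp [mul_comm]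
      simp only [dualF]
      rw [this, hhom _ (by norm_num) κ hκ, mul_inv, inv_inv]
    have e2 : dualF n f (fun _ => 2 * t) = 2 * t / n := by
      have : (fun _ : Fin n => (2 * t)⁻¹) = (2 * t)⁻¹ • (fun _ : Fin n => (1 : ℝ)) := by
        ext i; simp
      simp only [dualF]
      rw [this, hhom _ (by positivity) _ (fun _ => one_pos), hnorm, mul_inv, inv_inv]
      rfl
    have e3 : dualF n f ((1 / 2 : ℝ) • (fun i => 2 * (κ i)⁻¹) + (1 / 2 : ℝ) • (fun _ => 2 * t))
        = (f (c t))⁻¹ := by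
      simp only [dualF, c]
      congr 2
      ext i
      simp
    rw [e1, e2, e3] at hcc
    simp only [smul_eq_mul] at hcc
    simp only [zero_add, Pi.inv_apply, hc0, smul_eq_mul]
    rw [inv_mul_eq_div, le_div_iff₀ ht]
    have e4 : 1 / (n : ℝ) * t = 1 / 2 * (2 * t / n) := by ring
    rw [e4]
    linarith
  rw [le_div_iff₀ (by positivity)] at hle
  calc f κ ^ 2 / n = 1 / n * f κ ^ 2 := by ring
    _ ≤ _ := hle
end
end

section
/- Let n ≥ 2 and let f : Γ₊ → ℝ be smooth, symmetric, convex, positively homogeneous of degree one, and normalized so that f(1, …, 1) = n. Then f(x) ≥ Σ_{i=1}^n x_i for every x ∈ Γ₊. -/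
open Filter Topology Matrix

noncomputable section

/-- a smooth, symmetric, convex, 1-homogeneous `f` on Γ₊ normalized by
`f(1,…,1) = n` satisfies `f(x) ≥ Σ_i x_i`. -/
theorem convex_ge_sum (n : ℕ) (hn : 2 ≤ n) (f : (Fin n → ℝ) → ℝ)
    (hsmooth : ContDiffOn ℝ (⊤ : ℕ∞) f (posCone n))
    (hsym : ∀ σ : Equiv.Perm (Fin n), ∀ x ∈ posCone n, f (x ∘ σ) = f x)
    (hconv : ConvexOn ℝ (posCone n) f)
    (hhom : ∀ k : ℝ, 0 < k → ∀ x ∈ posCone n, f (k • x) = k * f x)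
    (hnorm : f (fun _ => 1) = n) :
    ∀ x ∈ posCone n, (∑ i, x i) ≤ f x := by
  intro x hx
  haveI : NeZero n := ⟨by omega⟩
  have hn0 : (0 : ℝ) < n := by
    have : 0 < n := by omega
    exact_mod_cast this
  have hS : 0 < ∑ i, x i :=
    Finset.sum_pos (fun i _ => hx i) Finset.univ_nonempty
  have hmem : ∀ j : Fin n, x ∘ (Equiv.addRight j) ∈ posCone n := fun j i => hx _
  have hJ := hconv.map_sum_le (t := Finset.univ) (w := fun _ : Fin n => (n : ℝ)⁻¹)
    (p := fun j : Fin n => x ∘ (Equiv.addRight j))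
    (fun _ _ => by positivity) (by simp [hn0.ne']) (fun j _ => hmem j)
  have hL : ∑ j : Fin n, (n : ℝ)⁻¹ • (x ∘ (Equiv.addRight j))
      = ((n : ℝ)⁻¹ * ∑ i, x i) • (fun _ : Fin n => (1 : ℝ)) := by
    funext i
    simp only [Finset.sum_apply, Pi.smul_apply, Function.comp, Equiv.coe_addRight,
      smul_eq_mul, mul_one]
    rw [← Finset.mul_sum]
    congr 1
    exact Equiv.sum_comp (Equiv.addLeft i) x
  rw [hL, hhom _ (by positivity) _ (fun _ => one_pos), hnorm] at hJ
  simp only [hsym _ x hx] at hJ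
  simp only [Finset.sum_const, Finset.card_univ, Fintype.card_fin, smul_eq_mul,
    nsmul_eq_mul] at hJ
  field_simp at hJ
  linarith
end
end

section
/- Let n ≥ 2 and let f : Γ₊ → ℝ be smooth, symmetric, convex, strictly positive, positively homogeneous of degree one, and normalized so that f(1, …, 1) = n. Then the dual function satisfies f_*(z) ≤ (Σ_{i=1}^n z_i^{-1})^{-1} for every z ∈ Γ₊ (equivalently, f_*(z) ≤ E_n(z)/(n E_{n-1}(z)), where E_j denotes the normalized elementary symmetric polynomial). -/
open Filter Topology Matrix

noncomputable section

/-- a smooth, symmetric, convex, positive, 1-homogeneous `f` on Γ₊ normalized by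
`f(1,…,1) = n` has dual bounded by `f_*(z) ≤ (Σ_i z_i⁻¹)⁻¹`. -/
theorem convex_dual_le_harmonic (n : ℕ) (hn : 2 ≤ n) (f : (Fin n → ℝ) → ℝ)
    (hsmooth : ContDiffOn ℝ (⊤ : ℕ∞) f (posCone n))
    (hsym : ∀ σ : Equiv.Perm (Fin n), ∀ x ∈ posCone n, f (x ∘ σ) = f x)
    (hconv : ConvexOn ℝ (posCone n) f)
    (hpos : ∀ x ∈ posCone n, 0 < f x)
    (hhom : ∀ k : ℝ, 0 < k → ∀ x ∈ posCone n, f (k • x) = k * f x)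
    (hnorm : f (fun _ => 1) = n) :
    ∀ z ∈ posCone n, dualF n f z ≤ (∑ i, (z i)⁻¹)⁻¹ := by
  intro z hz
  haveI : NeZero n := ⟨by omega⟩
  have hn0 : (0 : ℝ) < n := by exact_mod_cast (by omega : 0 < n)
  set x : Fin n → ℝ := fun i => (z i)⁻¹ with hx
  have hxp : x ∈ posCone n := fun i => inv_pos.mpr (hz i)
  have hS : 0 < ∑ i, x i := Finset.sum_pos (fun i _ => hxp i) ⟨0, Finset.mem_univ _⟩
  have hJ := hconv.map_sum_le (t := (Finset.univ : Finset (Fin n)))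
    (w := fun _ => (n : ℝ)⁻¹) (p := fun k => x ∘ (Equiv.addRight k))
    (fun _ _ => (inv_pos.mpr hn0).le)
    (by simp [hn0.ne'])
    (fun k _ i => hxp _)
  have h1 : (∑ k : Fin n, (n : ℝ)⁻¹ • (x ∘ (Equiv.addRight k)))
      = ((n : ℝ)⁻¹ * ∑ i, x i) • (fun _ => (1 : ℝ)) := by
    funext i
    simp only [Finset.sum_apply, Pi.smul_apply, Function.comp, smul_eq_mul, mul_one,
      ← Finset.mul_sum, Equiv.coe_addRight]
    congr 1
    exact Equiv.sum_comp (Equiv.addLeft i) x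
  have h2 : ∑ k : Fin n, (n : ℝ)⁻¹ • f (x ∘ (Equiv.addRight k)) = f x := by
    rw [Finset.sum_congr rfl (fun k _ => by rw [hsym _ x hxp])]
    simp [hn0.ne']
  rw [h1, h2, hhom _ (mul_pos (inv_pos.mpr hn0) hS) _ (fun _ => one_pos), hnorm] at hJ
  have h3 : ∑ i, x i ≤ f x := by
    calc ∑ i, x i = (n : ℝ)⁻¹ * (∑ i, x i) * n := by field_simp
      _ ≤ f x := hJ
  exact inv_anti₀ hS h3
end
end

section
/- Let n ≥ 2 and let f : Γ₊ → ℝ be smooth, symmetric, convex, strictly positive, strictly increasing in each argument, and positively homogeneous of degree one. Then f is inverse concave, i.e. the dual function f_*(x) = f(x₁⁻¹, …, xₙ⁻¹)⁻¹ is concave on Γ₊. -/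
open Filter Topology Matrix

noncomputable section

/-- a smooth, symmetric, convex, positive, strictly increasing,
1-homogeneous `f` on Γ₊ is inverse concave: its dual `f_*` is concave on Γ₊. -/
theorem convex_implies_inverse_concave (n : ℕ) (hn : 2 ≤ n) (f : (Fin n → ℝ) → ℝ)
    (hsmooth : ContDiffOn ℝ (⊤ : ℕ∞) f (posCone n))
    (hsym : ∀ σ : Equiv.Perm (Fin n), ∀ x ∈ posCone n, f (x ∘ σ) = f x)
    (hconv : ConvexOn ℝ (posCone n) f)
    (hpos : ∀ x ∈ posCone n, 0 < f x)
    (hmono : ∀ x ∈ posCone n, ∀ i, 0 < D1 n f x i)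
    (hhom : ∀ k : ℝ, 0 < k → ∀ x ∈ posCone n, f (k • x) = k * f x) :
    ConcaveOn ℝ (posCone n) (dualF n f) := by
  have hadd : ∀ x ∈ posCone n, ∀ y ∈ posCone n, x + y ∈ posCone n :=
    fun x hx y hy i => add_pos (hx i) (hy i)
  have hsmul : ∀ k : ℝ, 0 < k → ∀ x ∈ posCone n, k • x ∈ posCone n :=
    fun k hk x hx i => mul_pos hk (hx i)
  have hopen : IsOpen (posCone n) := by
    have : posCone n = ⋂ i, {x : Fin n → ℝ | 0 < x i} := by
      ext x; simp [posCone]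
    rw [this]
    exact isOpen_iInter_of_finite fun i => isOpen_lt continuous_const (continuous_apply i)
  have hsub : ∀ x ∈ posCone n, ∀ y ∈ posCone n, f (x + y) ≤ f x + f y := by
    intro x hx y hy
    have h := hconv.2 hx hy (show (0:ℝ) ≤ 1/2 by norm_num) (show (0:ℝ) ≤ 1/2 by norm_num) (by norm_num)
    rw [← smul_add, hhom _ (by norm_num) _ (hadd x hx y hy)] at h
    simp only [smul_eq_mul] at h
    linarith
  have hlim : ∀ w ∈ posCone n, ∀ v : Fin n → ℝ,
      Tendsto (fun t : ℝ => t⁻¹ * (f (w + t • v) - f w)) (𝓝[>] 0) (𝓝 (fderiv ℝ f w v)) := by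
    intro w hw v
    have hd : DifferentiableAt ℝ f w :=
      (hsmooth.contDiffAt (hopen.mem_nhds hw)).differentiableAt (by simp)
    have := (hd.hasFDerivAt.hasLineDerivAt v).tendsto_slope_zero_right
    simpa using this
  have hle : ∀ w ∈ posCone n, ∀ v ∈ posCone n, fderiv ℝ f w v ≤ f v := by
    intro w hw v hv
    refine le_of_tendsto (hlim w hw v) ?_
    filter_upwards [self_mem_nhdsWithin] with t ht
    have ht' : (0 : ℝ) < t := ht
    have h := hsub w hw _ (hsmul t ht' v hv)
    rw [hhom t ht' v hv] at h
    rw [inv_mul_le_iff₀ ht']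
    linarith
  have heuler : ∀ w ∈ posCone n, fderiv ℝ f w w = f w := by
    intro w hw
    refine tendsto_nhds_unique (hlim w hw w) ?_
    refine tendsto_const_nhds.congr' ?_
    filter_upwards [self_mem_nhdsWithin] with t ht
    have ht' : (0 : ℝ) < t := ht
    have h := hhom (1 + t) (by linarith) w hw
    rw [add_smul, one_smul] at h
    rw [h]
    field_simp
    ring
  have hexp : ∀ w v : Fin n → ℝ, fderiv ℝ f w v = ∑ i, D1 n f w i * v i := by
    intro w v
    conv_lhs => rw [pi_eq_sum_univ' v]
    simp [D1, map_sum, mul_comm]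
  have hcv : Convex ℝ (posCone n) := hconv.1
  have hinv : ∀ x ∈ posCone n, (fun i => (x i)⁻¹) ∈ posCone n := fun x hx i => inv_pos.2 (hx i)
  refine ⟨hcv, ?_⟩
  intro x hx y hy a b ha hb hab
  have hz := hcv hx hy ha hb hab
  set z := a • x + b • y with hzdef
  set w : Fin n → ℝ := fun i => (z i)⁻¹ with hwdef
  have hw : w ∈ posCone n := hinv z hz
  have hS := hpos w hw
  -- linear upper bound
  have key : ∀ u ∈ posCone n, dualF n f u ≤ (∑ i, D1 n f w i * w i ^ 2 * u i) / f w ^ 2 := by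
    intro u hu
    have h1 := hle w hw _ (hinv u hu)
    have h2 := heuler w hw
    rw [hexp] at h1 h2
    have hcs := Finset.sum_sq_le_sum_mul_sum_of_sq_eq_mul Finset.univ
      (r := fun i => D1 n f w i * w i) (f := fun i => D1 n f w i * (u i)⁻¹)
      (g := fun i => D1 n f w i * w i ^ 2 * u i)
      (fun i _ => mul_nonneg (hmono w hw i).le (inv_pos.2 (hu i)).le)
      (fun i _ => mul_nonneg (mul_nonneg (hmono w hw i).le (sq_nonneg _)) (hu i).le)
      (fun i _ => by have := (hu i).ne'; field_simp)
    rw [h2] at hcs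
    have hT : 0 ≤ ∑ i, D1 n f w i * w i ^ 2 * u i := Finset.sum_nonneg
      (fun i _ => mul_nonneg (mul_nonneg (hmono w hw i).le (sq_nonneg _)) (hu i).le)
    have hF := hpos _ (hinv u hu)
    unfold dualF
    rw [le_div_iff₀ (by positivity), inv_mul_le_iff₀ hF]
    exact hcs.trans (mul_le_mul_of_nonneg_right h1 hT)
  have hLz : (∑ i, D1 n f w i * w i ^ 2 * z i) / f w ^ 2 = dualF n f z := by
    have h2 := heuler w hw
    rw [hexp] at h2
    have : ∑ i, D1 n f w i * w i ^ 2 * z i = f w := by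
      rw [← h2]
      refine Finset.sum_congr rfl fun i _ => ?_
      have hzi : w i * z i = 1 := inv_mul_cancel₀ (hz i).ne'
      linear_combination (D1 n f w i * w i) * hzi
    rw [this]
    change _ = (f w)⁻¹
    field_simp
  have hlin : (∑ i, D1 n f w i * w i ^ 2 * z i) / f w ^ 2
      = a * ((∑ i, D1 n f w i * w i ^ 2 * x i) / f w ^ 2)
        + b * ((∑ i, D1 n f w i * w i ^ 2 * y i) / f w ^ 2) := by
    rw [← mul_div_assoc, ← mul_div_assoc, ← add_div, Finset.mul_sum, Finset.mul_sum,
      ← Finset.sum_add_distrib]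
    congr 1
    refine Finset.sum_congr rfl fun i _ => ?_
    have : z i = a * x i + b * y i := by simp [hzdef]
    rw [this]; ring
  rw [← hLz, hlin]
  simp only [smul_eq_mul]
  exact add_le_add (mul_le_mul_of_nonneg_left (key x hx) ha)
    (mul_le_mul_of_nonneg_left (key y hy) hb)
end
end

section
/- Let n ≥ 2 and let f : Γ₊ → ℝ be smooth, symmetric, convex, strictly positive, positively homogeneous of degree one, and normalized so that f(1, …, 1) = n. Then the dual function f_* approaches zero on the boundary of Γ₊: for every sequence z^{(j)} ∈ Γ₊ with min_i z_i^{(j)} → 0, one has f_*(z^{(j)}) → 0. In fact 0 < f_*(z) ≤ min_i z_i for every z ∈ Γ₊. -/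
open Filter Topology Matrix

noncomputable section

/-- Averaging over cyclic shifts: a symmetric convex 1-homogeneous normalized `f` dominates the sum. -/
theorem sum_le_of_sym_convex (n : ℕ) (hn : 2 ≤ n) (f : (Fin n → ℝ) → ℝ)
    (hsym : ∀ σ : Equiv.Perm (Fin n), ∀ x ∈ posCone n, f (x ∘ σ) = f x)
    (hconv : ConvexOn ℝ (posCone n) f)
    (hhom : ∀ k : ℝ, 0 < k → ∀ x ∈ posCone n, f (k • x) = k * f x)
    (hnorm : f (fun _ => 1) = n) (x : Fin n → ℝ) (hx : x ∈ posCone n) :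
    ∑ i, x i ≤ f x := by
  haveI : NeZero n := ⟨by omega⟩
  have hn0 : (0 : ℝ) < n := by exact_mod_cast (by omega : 0 < n)
  have h := hconv.map_sum_le (t := Finset.univ) (w := fun _ : Fin n => (n : ℝ)⁻¹)
    (p := fun k : Fin n => x ∘ (Equiv.addRight k))
    (fun _ _ => by positivity) (by simp [hn0.ne'])
    (fun k _ i => hx _)
  have hs : 0 < ∑ i, x i := Finset.sum_pos (fun i _ => hx i) ⟨0, Finset.mem_univ _⟩
  have e : (∑ k : Fin n, (n : ℝ)⁻¹ • (x ∘ (Equiv.addRight k)))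
      = ((n : ℝ)⁻¹ * ∑ i, x i) • (fun _ : Fin n => (1 : ℝ)) := by
    funext i
    have : ∑ k, x (i + k) = ∑ k, x k := Equiv.sum_comp (Equiv.addLeft i) x
    simp [Finset.sum_apply, ← Finset.mul_sum, this]
  rw [e, hhom _ (by positivity) _ (fun _ => one_pos), hnorm] at h
  simp only [hsym _ x hx, smul_eq_mul, Finset.sum_const, Finset.card_univ, Fintype.card_fin,
    nsmul_eq_mul] at h
  field_simp at h
  exact h

/-- for a smooth, symmetric, convex, positive, 1-homogeneous `f` on Γ₊ with
`f(1,…,1) = n`, the dual satisfies `0 < f_*(z) ≤ min_i z_i`, and hence `f_*` approaches zero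
along every sequence in Γ₊ whose minimal coordinate tends to zero. -/
theorem convex_dual_vanishes_on_boundary (n : ℕ) (hn : 2 ≤ n) (f : (Fin n → ℝ) → ℝ)
    (hsmooth : ContDiffOn ℝ (⊤ : ℕ∞) f (posCone n))
    (hsym : ∀ σ : Equiv.Perm (Fin n), ∀ x ∈ posCone n, f (x ∘ σ) = f x)
    (hconv : ConvexOn ℝ (posCone n) f)
    (hpos : ∀ x ∈ posCone n, 0 < f x)
    (hhom : ∀ k : ℝ, 0 < k → ∀ x ∈ posCone n, f (k • x) = k * f x)
    (hnorm : f (fun _ => 1) = n) :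
    (∀ z ∈ posCone n, 0 < dualF n f z ∧ dualF n f z ≤ ⨅ i, z i) ∧
    (∀ z : ℕ → Fin n → ℝ, (∀ j, z j ∈ posCone n) →
      Tendsto (fun j => ⨅ i, z j i) atTop (𝓝 0) →
      Tendsto (fun j => dualF n f (z j)) atTop (𝓝 0)) := by
  haveI : NeZero n := ⟨by omega⟩
  have key : ∀ z ∈ posCone n, 0 < dualF n f z ∧ dualF n f z ≤ ⨅ i, z i := by
    intro z hz
    have hz' : (fun i => (z i)⁻¹) ∈ posCone n := fun i => inv_pos.2 (hz i)
    refine ⟨inv_pos.2 (hpos _ hz'), le_ciInf fun i => ?_⟩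
    have h1 := sum_le_of_sym_convex n hn f hsym hconv hhom hnorm _ hz'
    have h2 : (z i)⁻¹ ≤ ∑ j, (z j)⁻¹ :=
      Finset.single_le_sum (f := fun j => (z j)⁻¹) (fun j _ => (hz' j).le) (Finset.mem_univ i)
    exact inv_le_of_inv_le₀ (hz i) (h2.trans h1)
  refine ⟨key, fun z hz hlim => ?_⟩
  exact squeeze_zero (fun j => (key _ (hz j)).1.le) (fun j => (key _ (hz j)).2) hlim
end
end

section
/- Let n ≥ 2 and let g : Γ₊ → ℝ be continuous, strictly positive, positively homogeneous of degree one, and suppose g approaches zero on the boundary of Γ₊ (for every sequence τ^{(j)} ∈ Γ₊ converging to a point of the topological boundary of Γ₊, g(τ^{(j)}) → 0). Then for every C > 0 there exists C' > 0 such that every τ ∈ Γ₊ satisfying max_i τ_i ≤ C g(τ) also satisfies max_i τ_i ≤ C' min_i τ_i. -/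
open Filter Topology Matrix

noncomputable section

/-- if `g` is continuous, positive, 1-homogeneous on Γ₊ and approaches zero on the
boundary of Γ₊, then for every `C > 0` there is `C' > 0` such that any `τ ∈ Γ₊` with
`max_i τ_i ≤ C g(τ)` satisfies `max_i τ_i ≤ C' min_i τ_i`. -/
theorem pinching_from_boundary_vanishing (n : ℕ) (hn : 2 ≤ n) (g : (Fin n → ℝ) → ℝ)
    (hcont : ContinuousOn g (posCone n))
    (hpos : ∀ x ∈ posCone n, 0 < g x)
    (hhom : ∀ k : ℝ, 0 < k → ∀ x ∈ posCone n, g (k • x) = k * g x)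
    (hbdry : ∀ (τ : ℕ → Fin n → ℝ) (p : Fin n → ℝ), (∀ j, τ j ∈ posCone n) →
      p ∈ frontier (posCone n) → Tendsto τ atTop (𝓝 p) →
      Tendsto (fun j => g (τ j)) atTop (𝓝 0)) :
    ∀ C : ℝ, 0 < C → ∃ C' : ℝ, 0 < C' ∧
      ∀ τ ∈ posCone n, (⨆ i, τ i) ≤ C * g τ → (⨆ i, τ i) ≤ C' * ⨅ i, τ i := by
  intro C hC
  by_contra hcon
  push Not at hcon
  haveI : Nonempty (Fin n) := ⟨⟨0, by omega⟩⟩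
  have hex : ∀ j : ℕ, ∃ σ ∈ posCone n, (∀ i, σ i ≤ 1) ∧ 1 / C ≤ g σ ∧
      ∏ i, σ i ≤ 1 / ((j : ℝ) + 1) := by
    intro j
    have hj : (0 : ℝ) < (j : ℝ) + 1 := by positivity
    obtain ⟨τ, hτ, h1, h2⟩ := hcon ((j : ℝ) + 1) hj
    have hτ' : ∀ i, 0 < τ i := hτ
    have hle : ∀ i, τ i ≤ ⨆ i, τ i := fun i => le_ciSup (Set.finite_range τ).bddAbove i
    obtain ⟨i₀, hi₀⟩ := exists_eq_ciInf_of_finite (f := τ)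
    rw [← hi₀] at h2
    generalize (⨆ i, τ i) = M at h1 h2 hle
    have hM : 0 < M := (hτ' i₀).trans_le (hle i₀)
    have hσ1 : ∀ i, (M⁻¹ • τ) i ≤ 1 := by
      intro i
      simp only [Pi.smul_apply, smul_eq_mul]
      rw [inv_mul_le_iff₀ hM]
      simpa using hle i
    have hσ0 : ∀ i, 0 < (M⁻¹ • τ) i := by
      intro i
      simp only [Pi.smul_apply, smul_eq_mul]
      exact mul_pos (inv_pos.2 hM) (hτ' i)
    refine ⟨M⁻¹ • τ, hσ0, hσ1, ?_, ?_⟩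
    · rw [hhom _ (inv_pos.2 hM) τ hτ, div_le_iff₀ hC, mul_assoc, mul_comm (g τ),
        le_inv_mul_iff₀ hM, mul_one]
      exact h1
    · rw [← Finset.mul_prod_erase _ _ (Finset.mem_univ i₀)]
      have hp : ∏ i ∈ Finset.univ.erase i₀, (M⁻¹ • τ) i ≤ 1 :=
        Finset.prod_le_one (fun i _ => (hσ0 i).le) (fun i _ => hσ1 i)
      refine (mul_le_of_le_one_right (hσ0 i₀).le hp).trans ?_
      simp only [Pi.smul_apply, smul_eq_mul]
      rw [inv_mul_le_iff₀ hM, mul_one_div, le_div_iff₀ hj, mul_comm]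
      exact h2.le
  choose σ hσ hσ1 hσg hσp using hex
  have hK : IsCompact (Set.Icc (0 : Fin n → ℝ) 1) := isCompact_Icc
  obtain ⟨p, -, φ, hφ, hlim⟩ := hK.tendsto_subseq (x := σ)
    (fun j => ⟨fun i => (hσ j i).le, fun i => hσ1 j i⟩)
  have hopen : IsOpen (posCone n) := by
    have : posCone n = ⋂ i, {x : Fin n → ℝ | 0 < x i} := by
      ext x; simp [posCone]
    rw [this]
    exact isOpen_iInter_of_finite fun i => isOpen_lt continuous_const (continuous_apply i)
  have hp : p ∈ frontier (posCone n) := by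
    rw [hopen.frontier_eq]
    refine ⟨mem_closure_of_tendsto hlim (Eventually.of_forall fun j => hσ _), fun hpp => ?_⟩
    have hc : Continuous fun x : Fin n → ℝ => ∏ i, x i := by fun_prop
    have h1 : Tendsto (fun j => ∏ i, (σ ∘ φ) j i) atTop (𝓝 (∏ i, p i)) :=
      (hc.tendsto p).comp hlim
    have h2 : Tendsto (fun j => 1 / ((φ j : ℝ) + 1)) atTop (𝓝 0) :=
      tendsto_one_div_add_atTop_nhds_zero_nat.comp hφ.tendsto_atTop
    have h3 : ∏ i, p i ≤ 0 := le_of_tendsto_of_tendsto' h1 h2 fun j => hσp (φ j)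
    exact absurd (Finset.prod_pos fun i _ => hpp i) (not_lt.2 h3)
  have h0 := hbdry (σ ∘ φ) p (fun j => hσ _) hp hlim
  have : 1 / C ≤ 0 := ge_of_tendsto' h0 fun j => hσg (φ j)
  exact absurd (one_div_pos.2 hC) (not_lt.2 this)
end
end

section
/- Let n ≥ 2 and let f : Γ₊ → ℝ be smooth, symmetric, strictly increasing in each argument, positively homogeneous of degree one, and normalized so that f(1, …, 1) = n. Let κ ∈ Γ₊ with κ₁ ≤ κ₂ ≤ … ≤ κₙ and suppose κ₁ = δ' f(κ) for some 0 < δ' ≤ 1/n. Then Σ_{k=1}^n ḟ^k(κ) κ_k (κ_k − κ₁) ≥ ḟ^n(κ) κₙ κ₁ (1/n − δ'). -/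
open Filter Topology Matrix

noncomputable section

/-- if `κ ∈ Γ₊` is ordered increasingly with `κ₁ = δ' f(κ)`, `0 < δ' ≤ 1/n`,
then `Σ_k ḟ^k κ_k (κ_k − κ₁) ≥ ḟ^n κ_n κ₁ (1/n − δ')`. -/
theorem zero_order_lower_bound (n : ℕ) [NeZero n] (hn : 2 ≤ n) (f : (Fin n → ℝ) → ℝ)
    (hsmooth : ContDiffOn ℝ (⊤ : ℕ∞) f (posCone n))
    (hsym : ∀ σ : Equiv.Perm (Fin n), ∀ x ∈ posCone n, f (x ∘ σ) = f x)
    (hmono : ∀ x ∈ posCone n, ∀ i, 0 < D1 n f x i)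
    (hhom : ∀ k : ℝ, 0 < k → ∀ x ∈ posCone n, f (k • x) = k * f x)
    (hnorm : f (fun _ => 1) = n)
    (κ : Fin n → ℝ) (hκ : κ ∈ posCone n) (hord : Monotone κ)
    (δ' : ℝ) (hδ'0 : 0 < δ') (hδ'n : δ' ≤ 1 / n)
    (hmin : κ 0 = δ' * f κ) :
    D1 n f κ ⟨n - 1, by omega⟩ * κ ⟨n - 1, by omega⟩ * κ 0 * (1 / n - δ') ≤
      ∑ k, D1 n f κ k * κ k * (κ k - κ 0) := by
  have hopen : IsOpen (posCone n) := by
    have : posCone n = ⋂ i, {x : Fin n → ℝ | 0 < x i} := by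
      ext x; simp [posCone]
    rw [this]
    exact isOpen_iInter_of_finite fun i => isOpen_lt continuous_const (continuous_apply i)
  have hconv : Convex ℝ (posCone n) := by
    intro x hx y hy a b ha hb hab i
    have h1 := hx i
    have h2 := hy i
    simp only [Pi.add_apply, Pi.smul_apply, smul_eq_mul]
    rcases ha.eq_or_lt with h | h
    · have : b = 1 := by linarith
      subst h this; simpa using h2
    · have := mul_pos h h1
      have := mul_nonneg hb h2.le
      linarith
  set l : Fin n := ⟨n - 1, by omega⟩ with hl
  have hle : ∀ i, κ i ≤ κ l := fun i => hord (by
    rw [Fin.le_def]; have := i.2; simp only [hl]; omega)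
  have hfd : ∀ x ∈ posCone n, HasFDerivWithinAt f (fderiv ℝ f x) (posCone n) x := by
    intro x hx
    exact ((hsmooth.differentiableOn (by simp)).differentiableAt
      (hopen.mem_nhds hx)).hasFDerivAt.hasFDerivWithinAt
  have hcm : (fun _ : Fin n => κ l) ∈ posCone n := fun _ => hκ l
  obtain ⟨z, hz, hzeq⟩ := domain_mvt hfd hconv hκ hcm
  have hzp : z ∈ posCone n := hconv.segment_subset hκ hcm hz
  have hnn : 0 ≤ fderiv ℝ f z ((fun _ : Fin n => κ l) - κ) := by
    rw [← Finset.univ_sum_single ((fun _ : Fin n => κ l) - κ), map_sum]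
    refine Finset.sum_nonneg fun i _ => ?_
    have h : (Pi.single i (((fun _ : Fin n => κ l) - κ) i) : Fin n → ℝ)
        = (κ l - κ i) • Pi.single i (1 : ℝ) := by
      rw [← Pi.single_smul]; simp
    rw [h, map_smul, smul_eq_mul]
    exact mul_nonneg (sub_nonneg.2 (hle i)) (hmono z hzp i).le
  have hconst : f (fun _ : Fin n => κ l) = κ l * n := by
    have := hhom (κ l) (hκ l) (fun _ => 1) (fun _ => one_pos)
    rw [hnorm] at this
    rw [← this]; congr 1; ext; simp
  have hfle : f κ ≤ κ l * n := by linarith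
  have hn0 : (0 : ℝ) < n := by positivity
  have hk0 : 0 < κ 0 := hκ 0
  have hfpos : 0 < f κ := by
    by_contra hc
    push Not at hc
    have := mul_nonpos_of_nonneg_of_nonpos hδ'0.le hc
    linarith
  have hn1 : (1 : ℝ) / n ≤ 1 := by
    rw [div_le_one hn0]; exact_mod_cast (by omega : 1 ≤ n)
  have hk0f : κ 0 ≤ f κ := by
    rw [hmin]; exact mul_le_of_le_one_left hfpos.le (hδ'n.trans hn1)
  have hkey : κ 0 * (1 / n - δ') ≤ κ l - κ 0 := by
    have h1 : κ 0 * (1 / n - δ') ≤ f κ * (1 / n - δ') :=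
      mul_le_mul_of_nonneg_right hk0f (sub_nonneg.2 hδ'n)
    have h2 : f κ * (1 / n) ≤ κ l := by
      rw [mul_one_div, div_le_iff₀ hn0]; exact hfle
    nlinarith
  calc D1 n f κ l * κ l * κ 0 * (1 / n - δ')
      = D1 n f κ l * κ l * (κ 0 * (1 / n - δ')) := by ring
    _ ≤ D1 n f κ l * κ l * (κ l - κ 0) :=
      mul_le_mul_of_nonneg_left hkey (mul_pos (hmono κ hκ l) (hκ l)).le
    _ ≤ ∑ k, D1 n f κ k * κ k * (κ k - κ 0) :=
      Finset.single_le_sum (f := fun k => D1 n f κ k * κ k * (κ k - κ 0))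
        (fun k _ => mul_nonneg (mul_pos (hmono κ hκ k) (hκ k)).le
          (sub_nonneg.2 (hord (Fin.zero_le k)))) (Finset.mem_univ l)
end
end

section
/- Let n ≥ 2 and let f : Γ₊ → (0,∞) be continuous, symmetric, strictly increasing in each argument, positively homogeneous of degree one, and suppose its dual f_* approaches zero on the boundary of Γ₊ (f_*(z^{(j)}) → 0 for every sequence z^{(j)} ∈ Γ₊ converging to a point of the boundary of Γ₊). Then for every C > 0 there exists C' > 0 such that every κ ∈ Γ₊ satisfying min_i κ_i ≥ C f(κ) also satisfies max_i κ_i ≤ C' min_i κ_i. -/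
open Filter Topology Matrix

noncomputable section

/-- if `f` is continuous, positive, symmetric, strictly increasing in each
argument and 1-homogeneous on Γ₊, and its dual `f_*` approaches zero on the boundary of Γ₊,
then for every `C > 0` there is `C' > 0` such that any `κ ∈ Γ₊` with `min_i κ_i ≥ C f(κ)`
satisfies `max_i κ_i ≤ C' min_i κ_i`. -/
theorem pinching_estimate_analytic (n : ℕ) (hn : 2 ≤ n) (f : (Fin n → ℝ) → ℝ)
    (hcont : ContinuousOn f (posCone n))
    (hpos : ∀ x ∈ posCone n, 0 < f x)
    (hsym : ∀ σ : Equiv.Perm (Fin n), ∀ x ∈ posCone n, f (x ∘ σ) = f x)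
    (hmono : ∀ x ∈ posCone n, ∀ y ∈ posCone n, (∀ i, x i ≤ y i) → x ≠ y → f x < f y)
    (hhom : ∀ k : ℝ, 0 < k → ∀ x ∈ posCone n, f (k • x) = k * f x)
    (hbdry : ∀ (z : ℕ → Fin n → ℝ) (p : Fin n → ℝ), (∀ j, z j ∈ posCone n) →
      p ∈ frontier (posCone n) → Tendsto z atTop (𝓝 p) →
      Tendsto (fun j => dualF n f (z j)) atTop (𝓝 0)) :
    ∀ C : ℝ, 0 < C → ∃ C' : ℝ, 0 < C' ∧
      ∀ κ ∈ posCone n, C * f κ ≤ (⨅ i, κ i) → (⨆ i, κ i) ≤ C' * ⨅ i, κ i := by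
  intro C hC
  have hone : ∀ i : Fin n, ∀ M : ℝ, 0 < M → Function.update (fun _ => (1:ℝ)) i M ∈ posCone n := by
    intro i M hM k
    by_cases h : k = i
    · subst h; simpa using hM
    · simp [h]
  have key : ∀ i : Fin n, ∀ᶠ j : ℕ in atTop,
      C⁻¹ < f (Function.update (fun _ => (1:ℝ)) i ((j:ℝ) + 1)) := by
    intro i
    have hz : ∀ j : ℕ, Function.update (fun _ => (1:ℝ)) i (1 / ((j:ℝ) + 1)) ∈ posCone n :=
      fun j => hone i _ (by positivity)
    have ht : Tendsto (fun j : ℕ => Function.update (fun _ : Fin n => (1:ℝ)) i (1 / ((j:ℝ) + 1)))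
        atTop (𝓝 (Function.update (fun _ => (1:ℝ)) i 0)) :=
      Tendsto.update tendsto_const_nhds i tendsto_one_div_add_atTop_nhds_zero_nat
    have hp : Function.update (fun _ => (1:ℝ)) i 0 ∈ frontier (posCone n) := by
      refine ⟨mem_closure_of_tendsto ht (Eventually.of_forall hz), fun h => ?_⟩
      have := interior_subset h i
      simp at this
    have h0 := hbdry _ _ hz hp ht
    filter_upwards [h0.eventually (gt_mem_nhds hC)] with j hj
    have he : (fun k => (Function.update (fun _ : Fin n => (1:ℝ)) i (1 / ((j:ℝ) + 1)) k)⁻¹)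
        = Function.update (fun _ => (1:ℝ)) i ((j:ℝ) + 1) := by
      funext k
      by_cases h : k = i
      · subst h; simp
      · simp [h]
    simp only [dualF] at hj
    rw [he] at hj
    exact inv_lt_of_inv_lt₀ (hpos _ (hone i _ (by positivity))) hj
  obtain ⟨j, hj⟩ := (eventually_all.2 key).exists
  refine ⟨(j:ℝ) + 1, by positivity, fun κ hκ hle => ?_⟩
  haveI : Nonempty (Fin n) := ⟨⟨0, by omega⟩⟩
  obtain ⟨i₀, hi₀⟩ := exists_eq_ciInf_of_finite (f := κ)
  have hmin : ∀ k, (⨅ i, κ i) ≤ κ k := fun k => ciInf_le (Set.finite_range κ).bddBelow k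
  set m := ⨅ i, κ i with hm
  have hm0 : 0 < m := hi₀ ▸ hκ i₀
  refine ciSup_le fun i => ?_
  by_contra! hlt
  have hw := hone i ((j:ℝ) + 1) (by positivity)
  set w := Function.update (fun _ : Fin n => (1:ℝ)) i ((j:ℝ) + 1) with hwdef
  have hmw : m • w ∈ posCone n := fun k => mul_pos hm0 (hw k)
  have hlew : ∀ k, (m • w) k ≤ κ k := by
    intro k
    by_cases h : k = i
    · subst h
      simp only [hwdef, Pi.smul_apply, Function.update_self, smul_eq_mul]
      linarith
    · simpa [hwdef, h] using hmin k
  have hfle : f (m • w) ≤ f κ := by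
    by_cases h : m • w = κ
    · rw [h]
    · exact (hmono _ hmw _ hκ hlew h).le
  rw [hhom m hm0 w hw] at hfle
  have h1 : 1 < C * f w := by
    have := mul_lt_mul_of_pos_left (hj i) hC
    rwa [mul_inv_cancel₀ hC.ne'] at this
  have h2 : m * 1 < m * (C * f w) := mul_lt_mul_of_pos_left h1 hm0
  have h3 : C * (m * f w) ≤ C * f κ := mul_le_mul_of_nonneg_left hfle hC.le
  linarith
end
end
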